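/- The quotient of B(4,3) by the normal closure of {P₁, P₂, P₃, P₄} (that is, the third Burnside group B_γ̂(3) of the closure of the 5-braid (σ₁σ₂σ₃σ₄)¹⁰) is a finite group of cardinality exactly 3¹⁰. -/

import Mathlib

/-- The free Burnside group `B(4,3)` of exponent 3 on four generators:
the free group on four generators modulo the normal closure of all cubes. -/
abbrev B43 : Type :=
  FreeGroup (Fin 4) ⧸ Subgroup.normalClosure {w : FreeGroup (Fin 4) | ∃ v, w = v ^ 3}

/-- The images `x₁, x₂, x₃, x₄` of the free generators in `B(4,3)`. -/
def x (i : Fin 4) : B43 := QuotientGroup.mk (FreeGroup.of i)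

/-- The elements `P_i` of `B(4,3)`:
`P_i = x₁x₂⁻¹x₃x₄⁻¹x₁⁻¹x₂x₃⁻¹x₄ · x_i · x₄x₃⁻¹x₂x₁⁻¹x₄⁻¹x₃x₂⁻¹x₁ · x_i⁻¹`. -/
def P (i : Fin 4) : B43 :=
  x 0 * (x 1)⁻¹ * x 2 * (x 3)⁻¹ * (x 0)⁻¹ * x 1 * (x 2)⁻¹ * x 3 * x i *
    (x 3 * (x 2)⁻¹ * x 1 * (x 0)⁻¹ * (x 3)⁻¹ * x 2 * (x 1)⁻¹ * x 0) * (x i)⁻¹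

/-- The third Burnside group of the closure of the 5-braid `(σ₁σ₂σ₃σ₄)¹⁰`:
the quotient of `B(4,3)` by the normal closure of `{P₁, P₂, P₃, P₄}`. -/
abbrev BurnsideGammaHat : Type :=
  B43 ⧸ Subgroup.normalClosure ({P 0, P 1, P 2, P 3} : Set B43)

/-!
In a group of exponent 3 every element commutes with its conjugates, so the group is 2-Engel; by
Levi's theorem it then has class at most 3, and `⁅⁅x, y⁆, z⁆` is an alternating trilinear map into
the centre. In terms of `s = (x₁, x₂⁻¹, x₃, x₄⁻¹)`, `U = s₁s₂s₃s₄` and `V = s₄s₃s₂s₁`, the relators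
become `P i = U V⁻¹ · x i · U⁻¹ V · (x i)⁻¹`, and they vanish exactly when `U⁻¹V` is central. Since
`U⁻¹V` is a product of commutators, commuting with each `sᵢ` is a system of linear equations in the
four basic triple commutators; it is unimodular, so these vanish and the quotient has class 2.
A group of exponent 3 and class 2 on four generators is generated by 4 elements modulo 6 central
commutators, so its order divides `3 ^ 10`. Conversely the relators hold in every class 2 group,
as there `U⁻¹V` is central, so the free such group, of order `3 ^ 10`, is a quotient.
-/

open scoped commutatorElement IsMulCommutative

section Commutators

variable {G : Type*} [Group G]

theorem commutatorElement_mem_commutator (g h : G) : ⁅g, h⁆ ∈ commutator G :=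
  Subgroup.commutator_mem_commutator (Subgroup.mem_top g) (Subgroup.mem_top h)

theorem commutatorElement_mul_left_of_mem_center {a b c : G}
    (h : ⁅b, c⁆ ∈ Subgroup.center G) : ⁅a * b, c⁆ = ⁅a, c⁆ * ⁅b, c⁆ := by
  rw [commutatorElement_mul_left_eq_conj_mul, Subgroup.mem_center_iff.1 h a,
    mul_inv_cancel_right, Subgroup.mem_center_iff.1 h]

theorem commutatorElement_mul_right_of_mem_center {a b c : G}
    (h : ⁅a, c⁆ ∈ Subgroup.center G) : ⁅a, b * c⁆ = ⁅a, b⁆ * ⁅a, c⁆ := by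
  rw [commutatorElement_mul_right_eq_mul_conj, mul_assoc ⁅a, b⁆, Subgroup.mem_center_iff.1 h b,
    ← mul_assoc, mul_inv_cancel_right]

theorem mem_center_of_forall_commute_of_closure_range_eq_top {ι : Type*} {s : ι → G}
    (hs : Subgroup.closure (Set.range s) = ⊤) {g : G} (hg : ∀ i, Commute g (s i)) :
    g ∈ Subgroup.center G := by
  rw [← Subgroup.centralizer_univ, ← Subgroup.coe_top, ← hs, Subgroup.centralizer_closure,
    Subgroup.mem_centralizer_iff]
  rintro _ ⟨i, rfl⟩
  exact (hg i).symm

end Commutators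

/-- The 2-Engel condition: every commutator `⁅x, y⁆` commutes with `y`. -/
def IsTwoEngel (G : Type*) [Group G] : Prop :=
  ∀ x y : G, ⁅⁅x, y⁆, y⁆ = 1

theorem commute_conj_of_forall_pow_three_eq_one {G : Type*} [Group G]
    (hG : ∀ g : G, g ^ 3 = 1) (x y : G) : Commute x (y * x * y⁻¹) := by
  have hyy : y * y = y⁻¹ := by rw [eq_inv_iff_mul_eq_one, ← hG y, pow_three']
  have left : x * (y * x * y⁻¹) * (y⁻¹ * x * y) = 1 :=
    calc x * (y * x * y⁻¹) * (y⁻¹ * x * y) = x * y * x * (y * y)⁻¹ * x * y := by group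
      _ = (x * y) ^ 3 := by rw [hyy, inv_inv, pow_three']; simp only [mul_assoc]
      _ = 1 := hG _
  have right : (y⁻¹ * x * y) * (y * x * y⁻¹ * x) = 1 :=
    calc (y⁻¹ * x * y) * (y * x * y⁻¹ * x) = y⁻¹ * x * (y * y) * x * y⁻¹ * x := by group
      _ = y⁻¹ * (x * y⁻¹) ^ 3 * y := by rw [hyy, pow_three']; group
      _ = 1 := by rw [hG, mul_one, inv_mul_cancel]
  exact (eq_inv_of_mul_eq_one_left left).trans (eq_inv_of_mul_eq_one_right right).symm

theorem isTwoEngel_of_forall_pow_three_eq_one {G : Type*} [Group G]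
    (hG : ∀ g : G, g ^ 3 = 1) : IsTwoEngel G := fun x y ↦ by
  rw [commutatorElement_eq_one_iff_commute, commutatorElement_def]
  exact (commute_conj_of_forall_pow_three_eq_one hG y x).symm.mul_left (Commute.refl y).inv_left

namespace IsTwoEngel

variable {G : Type*} [Group G]

theorem commute_right (hG : IsTwoEngel G) (x y : G) : Commute ⁅x, y⁆ y :=
  commutatorElement_eq_one_iff_commute.1 (hG x y)

theorem commutator_inv_left (hG : IsTwoEngel G) (x y : G) : ⁅x⁻¹, y⁆ = ⁅x, y⁆⁻¹ := by
  rw [commutatorElement_inv_left, commutatorElement_inv, mul_assoc, (hG.commute_right y x).eq,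
    inv_mul_cancel_left]

theorem commutator_inv_right (hG : IsTwoEngel G) (x y : G) : ⁅x, y⁻¹⁆ = ⁅x, y⁆⁻¹ := by
  rw [← commutatorElement_inv, hG.commutator_inv_left, commutatorElement_inv]

theorem commutator_swap_left (hG : IsTwoEngel G) (x y z : G) : ⁅⁅y, x⁆, z⁆ = ⁅⁅x, y⁆, z⁆⁻¹ := by
  rw [← commutatorElement_inv x y, hG.commutator_inv_left]

-- Obtained by expanding `⁅x, y * z⁆ = ⁅x, y⁆ * (y * ⁅x, z⁆ * y⁻¹)` in the relation that it commutes
-- with `y * z`.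
theorem commutator_swap_right (hG : IsTwoEngel G) (x y z : G) :
    ⁅⁅x, z⁆, y⁆ = ⁅⁅x, y⁆, z⁆⁻¹ := by
  have hy : y⁻¹ * ⁅x, y⁆ * y = ⁅x, y⁆ := by
    rw [mul_assoc, (hG.commute_right x y).eq, inv_mul_cancel_left]
  have hz : z⁻¹ * ⁅x, z⁆ * z = ⁅x, z⁆ := by
    rw [mul_assoc, (hG.commute_right x z).eq, inv_mul_cancel_left]
  have expand : ⁅x, y * z⁆ = ⁅x, y⁆ * (y * ⁅x, z⁆ * y⁻¹) := by
    rw [commutatorElement_mul_right_eq_mul_conj]; simp only [mul_assoc]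
  have key : ⁅y, ⁅x, z⁆⁆ = ⁅⁅x, y⁆⁻¹, z⁻¹⁆ :=
    calc ⁅y, ⁅x, z⁆⁆ = ⁅x, y⁆⁻¹ * ⁅x, y * z⁆ * ⁅x, z⁆⁻¹ := by
          rw [expand, commutatorElement_def y]; group
      _ = ⁅x, y⁆⁻¹ * ((y * z)⁻¹ * ⁅x, y * z⁆ * (y * z)) * ⁅x, z⁆⁻¹ := by
          rw [mul_assoc (y * z)⁻¹, (hG.commute_right x (y * z)).eq, inv_mul_cancel_left]
      _ = ⁅x, y⁆⁻¹ * z⁻¹ * (y⁻¹ * ⁅x, y⁆ * y) * z * (z⁻¹ * ⁅x, z⁆ * z) * ⁅x, z⁆⁻¹ := by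
          rw [expand]; group
      _ = ⁅⁅x, y⁆⁻¹, z⁻¹⁆ := by
          rw [hy, hz, commutatorElement_def ⁅x, y⁆⁻¹]; group
  rw [← commutatorElement_inv y, key, hG.commutator_inv_left, hG.commutator_inv_right, inv_inv]

theorem commutator_rotate (hG : IsTwoEngel G) (x y z : G) : ⁅⁅z, x⁆, y⁆ = ⁅⁅x, y⁆, z⁆ := by
  rw [hG.commutator_swap_left, hG.commutator_swap_right, inv_inv]

-- All three factors of the Hall–Witt identity are equal to `⁅⁅x, y⁆, z⁆`.
theorem commutator_commutator_pow_three (hG : IsTwoEngel G) (x y z : G) :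
    ⁅⁅x, y⁆, z⁆ ^ 3 = 1 := by
  have commutator_conj : ∀ x y z : G, ⁅⁅x, y⁆, y * z * y⁻¹⁆ = ⁅⁅x, y⁆, z⁆ := fun x y z ↦ by
    have hxyz : Commute ⁅⁅x, y⁆, z⁆ y := by
      rw [hG.commutator_swap_right x z y]
      exact (hG.commute_right ⁅x, z⁆ y).inv_left
    calc ⁅⁅x, y⁆, y * z * y⁻¹⁆ = ⁅y * ⁅x, y⁆ * y⁻¹, y * z * y⁻¹⁆ := by
          rw [← (hG.commute_right x y).eq, mul_inv_cancel_right]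
      _ = y * ⁅⁅x, y⁆, z⁆ * y⁻¹ := (conjugate_commutatorElement _ _ _).symm
      _ = ⁅⁅x, y⁆, z⁆ := by rw [← hxyz.eq, mul_inv_cancel_right]
  have hall_witt := commutatorElement_commutatorElement_conj_mul x y z
  rwa [commutator_conj, commutator_conj, commutator_conj, hG.commutator_rotate x y z,
    ← hG.commutator_rotate y z x, ← pow_three'] at hall_witt

theorem commutator_commutator_commutator (hG : IsTwoEngel G) (x y z w : G) :
    ⁅⁅⁅x, y⁆, z⁆, w⁆ = 1 := by
  have weight_two : ∀ x y z w : G, ⁅⁅⁅x, y⁆, z⁆, w⁆ = ⁅⁅z, w⁆, ⁅x, y⁆⁆ := fun x y z w ↦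
    hG.commutator_rotate z w ⁅x, y⁆
  have symm : ⁅⁅⁅x, y⁆, z⁆, w⁆ = ⁅⁅⁅z, w⁆, x⁆, y⁆ :=
    calc ⁅⁅⁅x, y⁆, z⁆, w⁆ = ⁅⁅⁅z, x⁆, y⁆, w⁆ := by rw [hG.commutator_rotate x y z]
      _ = ⁅⁅⁅z, x⁆, w⁆, y⁆⁻¹ := hG.commutator_swap_right _ _ _
      _ = ⁅⁅⁅z, w⁆, x⁆, y⁆ := by
        rw [hG.commutator_swap_right z w x, hG.commutator_inv_left, inv_inv]
  have antisymm : ⁅⁅⁅x, y⁆, z⁆, w⁆ = ⁅⁅⁅x, y⁆, z⁆, w⁆⁻¹ :=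
    calc ⁅⁅⁅x, y⁆, z⁆, w⁆ = ⁅⁅⁅z, w⁆, x⁆, y⁆ := symm
      _ = ⁅⁅x, y⁆, ⁅z, w⁆⁆ := weight_two z w x y
      _ = ⁅⁅z, w⁆, ⁅x, y⁆⁆⁻¹ := (commutatorElement_inv _ _).symm
      _ = ⁅⁅⁅x, y⁆, z⁆, w⁆⁻¹ := by rw [weight_two]
  have pow_two_eq_one : ⁅⁅⁅x, y⁆, z⁆, w⁆ ^ 2 = 1 := by
    rwa [pow_two, ← eq_inv_iff_mul_eq_one]
  rw [← hG.commutator_commutator_pow_three ⁅x, y⁆ z w, pow_succ, pow_two_eq_one, one_mul]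

theorem commutator_mem_center_of_mem_commutator (hG : IsTwoEngel G) {u : G}
    (hu : u ∈ commutator G) (y : G) : ⁅u, y⁆ ∈ Subgroup.center G := by
  rw [commutator_eq_closure] at hu
  induction hu using Subgroup.closure_induction with
  | mem u hu =>
    obtain ⟨g, h, rfl⟩ := hu
    exact Subgroup.mem_center_iff.2 fun w ↦ (commutatorElement_eq_one_iff_commute.1
      (hG.commutator_commutator_commutator g h y w)).symm.eq
  | one => rw [commutatorElement_one_left]; exact one_mem _
  | mul u v _ _ hu hv =>
    rw [commutatorElement_mul_left_of_mem_center hv]; exact mul_mem hu hv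
  | inv u _ hu => rw [hG.commutator_inv_left]; exact inv_mem hu

theorem commutator_mul_left (hG : IsTwoEngel G) (u : G) {v : G} (hv : v ∈ commutator G) (y : G) :
    ⁅u * v, y⁆ = ⁅u, y⁆ * ⁅v, y⁆ :=
  commutatorElement_mul_left_of_mem_center (hG.commutator_mem_center_of_mem_commutator hv y)

theorem commutator_mul_right (hG : IsTwoEngel G) {u : G} (hu : u ∈ commutator G) (y z : G) :
    ⁅u, y * z⁆ = ⁅u, y⁆ * ⁅u, z⁆ :=
  commutatorElement_mul_right_of_mem_center (hG.commutator_mem_center_of_mem_commutator hu z)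

/-- The left-normed triple commutator `⁅⁅x, y⁆, z⁆`, as an element of the centre written additively,
so that multilinear identities between triple commutators become identities in an abelian group. -/
def triple (hG : IsTwoEngel G) (x y z : G) : Additive (Subgroup.center G) :=
  .ofMul ⟨⁅⁅x, y⁆, z⁆,
    hG.commutator_mem_center_of_mem_commutator (commutatorElement_mem_commutator x y) z⟩

theorem triple_eq_iff (hG : IsTwoEngel G) {x y z : G} {c : Additive (Subgroup.center G)} :
    hG.triple x y z = c ↔ ⁅⁅x, y⁆, z⁆ = (c.toMul : G) :=
  Subtype.ext_iff

theorem triple_swap_left (hG : IsTwoEngel G) (x y z : G) :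
    hG.triple y x z = -hG.triple x y z :=
  hG.triple_eq_iff.2 (hG.commutator_swap_left x y z)

theorem triple_swap_right (hG : IsTwoEngel G) (x y z : G) :
    hG.triple x z y = -hG.triple x y z :=
  hG.triple_eq_iff.2 (hG.commutator_swap_right x y z)

theorem triple_rotate (hG : IsTwoEngel G) (x y z : G) : hG.triple z x y = hG.triple x y z :=
  hG.triple_eq_iff.2 (hG.commutator_rotate x y z)

theorem triple_reverse (hG : IsTwoEngel G) (x y z : G) : hG.triple z y x = -hG.triple x y z := by
  rw [hG.triple_swap_left, hG.triple_rotate z x y, hG.triple_rotate x y z]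

theorem triple_self_right (hG : IsTwoEngel G) (x y : G) : hG.triple x y y = 0 :=
  hG.triple_eq_iff.2 (hG x y)

theorem triple_self_outer (hG : IsTwoEngel G) (x y : G) : hG.triple x y x = 0 := by
  rw [hG.triple_rotate y x x, hG.triple_self_right]

theorem triple_mul_right (hG : IsTwoEngel G) (x y z w : G) :
    hG.triple x y (z * w) = hG.triple x y z + hG.triple x y w :=
  hG.triple_eq_iff.2 (hG.commutator_mul_right (commutatorElement_mem_commutator x y) z w)

theorem triple_mul_middle (hG : IsTwoEngel G) (x y z w : G) :
    hG.triple x (y * z) w = hG.triple x y w + hG.triple x z w := by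
  rw [hG.triple_swap_right, hG.triple_mul_right, hG.triple_swap_right x y, hG.triple_swap_right x z,
    neg_add, neg_neg, neg_neg]

theorem triple_eq_zero_of_forall_lt_lt {ι : Type*} [LinearOrder ι] (hG : IsTwoEngel G) {s : ι → G}
    (hs : ∀ i j k, i < j → j < k → hG.triple (s i) (s j) (s k) = 0) {i j : ι} (hij : i < j)
    (k : ι) : hG.triple (s i) (s j) (s k) = 0 := by
  rcases lt_trichotomy k i with hki | rfl | hik
  · rw [← hG.triple_rotate, hs k i j hki hij]
  · exact hG.triple_self_outer _ _
  rcases lt_trichotomy k j with hkj | rfl | hjk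
  · rw [hG.triple_swap_right, hs i k j hik hkj, neg_zero]
  · exact hG.triple_self_right _ _
  · exact hs i j k hij hjk

end IsTwoEngel

section Reversal

variable {G : Type*} [Group G]

/-- The element `U⁻¹ * V` measuring how far `U = s 0 * s 1 * s 2 * s 3` is from the product `V` of
the same factors in the opposite order; the relators `P i` say that it is central. -/
def revDefect (s : Fin 4 → G) : G :=
  (s 0 * s 1 * s 2 * s 3)⁻¹ * (s 3 * s 2 * s 1 * s 0)

theorem revDefect_eq_commutator_mul (s : Fin 4 → G) :
    revDefect s =
      ⁅(s 3)⁻¹, (s 0 * s 1 * s 2)⁻¹⁆ * ⁅(s 2)⁻¹, (s 0 * s 1)⁻¹⁆ * ⁅(s 1)⁻¹, (s 0)⁻¹⁆ := by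
  simp only [revDefect, commutatorElement_def]
  group

theorem revDefect_mem_commutator (s : Fin 4 → G) : revDefect s ∈ commutator G := by
  rw [revDefect_eq_commutator_mul]
  exact mul_mem (mul_mem (commutatorElement_mem_commutator _ _)
    (commutatorElement_mem_commutator _ _)) (commutatorElement_mem_commutator _ _)

theorem IsTwoEngel.commutator_revDefect (hG : IsTwoEngel G) (s : Fin 4 → G) (y : G) :
    ⁅revDefect s, y⁆ =
      ⁅⁅s 3, s 0 * s 1 * s 2⁆, y⁆ * ⁅⁅s 2, s 0 * s 1⁆, y⁆ * ⁅⁅s 1, s 0⁆, y⁆ := by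
  simp only [revDefect_eq_commutator_mul, hG.commutator_inv_left, hG.commutator_inv_right, inv_inv]
  rw [hG.commutator_mul_left _ (commutatorElement_mem_commutator _ _),
    hG.commutator_mul_left _ (commutatorElement_mem_commutator _ _)]

theorem IsTwoEngel.triple_add_eq_zero_of_commute_revDefect (hG : IsTwoEngel G) {s : Fin 4 → G}
    {y : G} (h : Commute (revDefect s) y) :
    hG.triple (s 3) (s 0) y + hG.triple (s 3) (s 1) y + hG.triple (s 3) (s 2) y +
      (hG.triple (s 2) (s 0) y + hG.triple (s 2) (s 1) y) + hG.triple (s 1) (s 0) y = 0 := by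
  have sum_eq_zero : hG.triple (s 3) (s 0 * s 1 * s 2) y + hG.triple (s 2) (s 0 * s 1) y +
      hG.triple (s 1) (s 0) y = 0 :=
    Subtype.ext ((hG.commutator_revDefect s y).symm.trans
      (commutatorElement_eq_one_iff_commute.2 h))
  simpa only [hG.triple_mul_middle] using sum_eq_zero

theorem IsTwoEngel.triple_eq_zero_of_commute_revDefect (hG : IsTwoEngel G) {s : Fin 4 → G}
    (h : ∀ i, Commute (revDefect s) (s i)) {i j k : Fin 4} (hij : i < j) (hjk : j < k) :
    hG.triple (s i) (s j) (s k) = 0 := by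
  let T (i j k : Fin 4) := hG.triple (s i) (s j) (s k)
  have relation (i) : T 3 0 i + T 3 1 i + T 3 2 i + (T 2 0 i + T 2 1 i) + T 1 0 i = 0 :=
    hG.triple_add_eq_zero_of_commute_revDefect (h i)
  have swap (i j k) : T j i k = -T i j k := hG.triple_swap_left _ _ _
  have rotate (i j k) : T k i j = T i j k := hG.triple_rotate _ _ _
  have reverse (i j k) : T k j i = -T i j k := hG.triple_reverse _ _ _
  have self_right (i j) : T i j j = 0 := hG.triple_self_right _ _
  have self_outer (i j) : T i j i = 0 := hG.triple_self_outer _ _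
  have relation₀ : -T 0 1 2 - T 0 1 3 - T 0 2 3 = 0 := by
    rw [← relation 0, self_right, self_right, self_right, reverse 0 1 3, reverse 0 2 3,
      reverse 0 1 2]
    abel
  have relation₁ : T 0 1 2 + T 0 1 3 - T 1 2 3 = 0 := by
    rw [← relation 1, self_right, self_right, self_outer, rotate 0 1 3, reverse 1 2 3, rotate 0 1 2]
    abel
  have relation₂ : T 0 2 3 + T 1 2 3 - T 0 1 2 = 0 := by
    rw [← relation 2, self_right, self_outer, self_outer, rotate 0 2 3, rotate 1 2 3, swap 0 1 2]
    abel
  have relation₃ : -T 0 1 3 - T 0 2 3 - T 1 2 3 = 0 := by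
    rw [← relation 3, self_outer, self_outer, self_outer, swap 0 2 3, swap 1 2 3, swap 0 1 3]
    abel
  have h₀₁₂ : T 0 1 2 = 0 := by
    linear_combination (norm := abel) -relation₀ - relation₁ - relation₂
  have h₀₁₃ : T 0 1 3 = 0 := by
    linear_combination (norm := abel) relation₀ + relation₁ - relation₃
  have h₀₂₃ : T 0 2 3 = 0 := by
    linear_combination (norm := abel) -relation₀ - h₀₁₂ - h₀₁₃
  have h₁₂₃ : T 1 2 3 = 0 := by
    linear_combination (norm := abel) h₀₁₂ + h₀₁₃ - relation₁
  change T i j k = 0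
  fin_cases i <;> fin_cases j <;> fin_cases k <;> first | assumption | simp at hij hjk

theorem IsTwoEngel.commutator_mem_center_of_commute_revDefect (hG : IsTwoEngel G)
    {s : Fin 4 → G} (hs : Subgroup.closure (Set.range s) = ⊤)
    (h : ∀ i, Commute (revDefect s) (s i)) {i j : Fin 4} (hij : i < j) :
    ⁅s i, s j⁆ ∈ Subgroup.center G :=
  mem_center_of_forall_commute_of_closure_range_eq_top hs fun k ↦
    commutatorElement_eq_one_iff_commute.1 <| hG.triple_eq_iff.1 <|
      hG.triple_eq_zero_of_forall_lt_lt
        (fun _ _ _ ↦ hG.triple_eq_zero_of_commute_revDefect h) hij k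

-- The commutators with `s 0, (s 1)⁻¹, s 2, (s 3)⁻¹` are all equal to `t = ⁅revDefect s, U⁆`, where
-- `U = s 0 * s 1 * s 2 * s 3`; expanding `U` gives `t = t * t⁻¹ * t * t⁻¹`.
theorem IsTwoEngel.commute_revDefect (hG : IsTwoEngel G) {s : Fin 4 → G}
    (h : ∀ i, ⁅revDefect s, ![s 0, (s 1)⁻¹, s 2, (s 3)⁻¹] i⁆ =
      ⁅revDefect s, s 0 * s 1 * s 2 * s 3⁆) (i : Fin 4) :
    Commute (revDefect s) (s i) := by
  have mul_right := hG.commutator_mul_right (revDefect_mem_commutator s)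
  have h₀ := h 0
  have h₁ := h 1
  have h₂ := h 2
  have h₃ := h 3
  generalize ht : ⁅revDefect s, s 0 * s 1 * s 2 * s 3⁆ = t at h₀ h₁ h₂ h₃
  simp only [Matrix.cons_val, hG.commutator_inv_right, inv_eq_iff_eq_inv] at h₀ h₁ h₂ h₃
  have t_eq_one : t = 1 := by
    rw [← ht, mul_right, mul_right, mul_right, h₀, h₁, h₂, h₃, mul_inv_cancel, one_mul,
      mul_inv_cancel]
  rw [← commutatorElement_eq_one_iff_commute]
  fin_cases i <;> simp_all

end Reversal

section CentralCommutators

/-- The pairs `i < j`, indexing the basic commutators `⁅s i, s j⁆` of a family `s`. -/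
abbrev IncPair (ι : Type*) [LT ι] : Type _ :=
  {p : ι × ι // p.1 < p.2}

variable {G : Type*} [Group G] {ι : Type*} [Finite ι] {s : ι → G} {m : ℕ}

theorem card_closure_range_dvd_pow_of_commute (hs : ∀ i j, Commute (s i) (s j))
    (hm : ∀ g : G, g ^ m = 1) : Nat.card (Subgroup.closure (Set.range s)) ∣ m ^ Nat.card ι := by
  have : IsMulCommutative (Subgroup.closure (Set.range s)) := by
    refine Subgroup.isMulCommutative_closure ?_
    rintro _ ⟨i, rfl⟩ _ ⟨j, rfl⟩
    exact hs i j
  have hrank : Group.rank (Subgroup.closure (Set.range s)) ≤ Nat.card ι :=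
    (Subgroup.rank_closure_finite_le_nat_card _).trans (Finite.card_range_le s)
  exact (card_dvd_exponent_pow_rank' _ fun g ↦ Subtype.ext (hm g)).trans (pow_dvd_pow m hrank)

theorem card_dvd_pow_of_commutator_mem_center [LinearOrder ι]
    (hs : Subgroup.closure (Set.range s) = ⊤)
    (hc : ∀ i j, i < j → ⁅s i, s j⁆ ∈ Subgroup.center G) (hm : ∀ g : G, g ^ m = 1) :
    Nat.card G ∣ m ^ (Nat.card ι + Nat.card (IncPair ι)) := by
  let c (p : IncPair ι) : G := ⁅s p.1.1, s p.1.2⁆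
  have c_central (p : IncPair ι) : c p ∈ Subgroup.center G := hc _ _ p.2
  let N := Subgroup.closure (Set.range c)
  have N_le_center : N ≤ Subgroup.center G :=
    (Subgroup.closure_le _).2 (Set.range_subset_iff.2 c_central)
  have : N.Normal := ⟨fun n hn g ↦ by
    rwa [Subgroup.mem_center_iff.1 (N_le_center hn) g, mul_inv_cancel_right]⟩
  have card_N : Nat.card N ∣ m ^ Nat.card (IncPair ι) :=
    card_closure_range_dvd_pow_of_commute
      (fun p q ↦ Subgroup.mem_center_iff.1 (c_central q) (c p)) hm
  let t (i : ι) : G ⧸ N := QuotientGroup.mk' N (s i)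
  have t_commute_of_lt (i j : ι) (hij : i < j) : Commute (t i) (t j) := by
    rw [← commutatorElement_eq_one_iff_commute, ← map_commutatorElement, QuotientGroup.mk'_apply,
      QuotientGroup.eq_one_iff]
    exact Subgroup.subset_closure ⟨⟨(i, j), hij⟩, rfl⟩
  have t_commute (i j : ι) : Commute (t i) (t j) := by
    rcases lt_trichotomy i j with hij | rfl | hji
    · exact t_commute_of_lt i j hij
    · exact Commute.refl _
    · exact (t_commute_of_lt j i hji).symm
  have closure_t : Subgroup.closure (Set.range t) = ⊤ := by
    rw [Set.range_comp' (QuotientGroup.mk' N) s, ← MonoidHom.map_closure, hs,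
      Subgroup.map_top_of_surjective _ (QuotientGroup.mk'_surjective N)]
  have card_quotient : Nat.card (G ⧸ N) ∣ m ^ Nat.card ι := by
    rw [← Subgroup.card_top, ← closure_t]
    refine card_closure_range_dvd_pow_of_commute t_commute ?_
    rintro ⟨g⟩
    exact congrArg (QuotientGroup.mk' N) (hm g)
  rw [Subgroup.card_eq_card_quotient_mul_card_subgroup N, pow_add]
  exact mul_dvd_mul card_quotient card_N

end CentralCommutators

theorem eq_top_of_forall_ofAdd_single_mem {κ : Type*} [Finite κ] [DecidableEq κ] {m : ℕ}
    {K : Subgroup (Multiplicative (κ → ZMod m))}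
    (hK : ∀ i, Multiplicative.ofAdd (Pi.single i 1) ∈ K) : K = ⊤ := by
  have span_le : Submodule.span (ZMod m) (Set.range (Pi.basisFun (ZMod m) κ)) ≤
      AddSubgroup.toZModSubmodule m (Subgroup.toAddSubgroup' K) := by
    rw [Submodule.span_le]
    rintro _ ⟨i, rfl⟩
    rw [Pi.basisFun_apply]
    exact hK i
  rw [Module.Basis.span_eq] at span_le
  exact eq_top_iff.2 fun a _ ↦ span_le (Submodule.mem_top (x := a.toAdd))

/-- The central extension of `ι → R` by `IncPair ι → R` with cocycle `(v, w) ↦ v i * w j` in the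
coordinate `i < j`. For `R = ZMod 3` this is the free group of exponent 3 and nilpotency class 2 on
`ι`, with the coordinates of `c` dual to the basic commutators. -/
@[ext]
structure FreeTwoStep (ι R : Type*) [LT ι] where
  /-- The image in the abelianization. -/
  v : ι → R
  /-- The central coordinates. -/
  c : IncPair ι → R

namespace FreeTwoStep

section Group

variable {ι R : Type*} [LT ι]

/-- `FreeTwoStep ι R` as a set of pairs of vectors. -/
def equivProd : FreeTwoStep ι R ≃ (ι → R) × (IncPair ι → R) where
  toFun a := (a.v, a.c)
  invFun p := ⟨p.1, p.2⟩

theorem card_eq [Finite ι] :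
    Nat.card (FreeTwoStep ι R) = Nat.card R ^ (Nat.card ι + Nat.card (IncPair ι)) := by
  rw [Nat.card_congr equivProd, Nat.card_prod, Nat.card_fun, Nat.card_fun, pow_add]

variable [CommRing R]

instance : One (FreeTwoStep ι R) := ⟨⟨0, 0⟩⟩

instance : Mul (FreeTwoStep ι R) :=
  ⟨fun a b ↦ ⟨a.v + b.v, fun p ↦ a.c p + b.c p + a.v p.1.1 * b.v p.1.2⟩⟩

instance : Inv (FreeTwoStep ι R) := ⟨fun a ↦ ⟨-a.v, fun p ↦ -a.c p + a.v p.1.1 * a.v p.1.2⟩⟩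

@[simp] theorem one_v : (1 : FreeTwoStep ι R).v = 0 := rfl
@[simp] theorem one_c : (1 : FreeTwoStep ι R).c = 0 := rfl
@[simp] theorem mul_v (a b : FreeTwoStep ι R) : (a * b).v = a.v + b.v := rfl
@[simp] theorem mul_c (a b : FreeTwoStep ι R) (p : IncPair ι) :
    (a * b).c p = a.c p + b.c p + a.v p.1.1 * b.v p.1.2 := rfl
@[simp] theorem inv_v (a : FreeTwoStep ι R) : a⁻¹.v = -a.v := rfl
@[simp] theorem inv_c (a : FreeTwoStep ι R) (p : IncPair ι) :
    a⁻¹.c p = -a.c p + a.v p.1.1 * a.v p.1.2 := rfl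

instance : Group (FreeTwoStep ι R) :=
  Group.ofLeftAxioms
    (fun a b d ↦ by ext <;> simp <;> ring)
    (fun a ↦ by ext <;> simp)
    (fun a ↦ by ext <;> simp)

theorem pow_three_eq_one [CharP R 3] (a : FreeTwoStep ι R) : a ^ 3 = 1 := by
  have three_eq_zero : (3 : R) = 0 := CharP.cast_eq_zero R 3
  rw [pow_three']
  ext i
  · simp only [mul_v, one_v, Pi.add_apply, Pi.zero_apply]
    linear_combination a.v i * three_eq_zero
  · simp only [mul_c, mul_v, one_c, Pi.add_apply, Pi.zero_apply]
    linear_combination (a.c i + a.v i.1.1 * a.v i.1.2) * three_eq_zero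

/-- The projection onto the abelianization. -/
def toVec : FreeTwoStep ι R →* Multiplicative (ι → R) where
  toFun a := .ofAdd a.v
  map_one' := rfl
  map_mul' _ _ := rfl

/-- The inclusion of the central coordinates. -/
def ofCentral : Multiplicative (IncPair ι → R) →* FreeTwoStep ι R where
  toFun c := ⟨0, c.toAdd⟩
  map_one' := rfl
  map_mul' c d := by ext <;> simp

theorem ofCentral_mem_center (c : Multiplicative (IncPair ι → R)) :
    ofCentral c ∈ Subgroup.center (FreeTwoStep ι R) :=
  Subgroup.mem_center_iff.2 fun a ↦ by ext <;> simp [ofCentral, add_comm]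

theorem ker_toVec : (toVec : FreeTwoStep ι R →* _).ker = ofCentral.range := by
  ext a
  refine ⟨fun ha ↦ ⟨.ofAdd a.c, FreeTwoStep.ext (Eq.symm ha) rfl⟩, ?_⟩
  rintro ⟨c, rfl⟩
  rfl

theorem commutator_eq_ofCentral (a b : FreeTwoStep ι R) :
    ⁅a, b⁆ = ofCentral (.ofAdd fun p ↦ a.v p.1.1 * b.v p.1.2 - b.v p.1.1 * a.v p.1.2) := by
  rw [commutatorElement_def, mul_inv_eq_iff_eq_mul, mul_inv_eq_iff_eq_mul]
  ext <;> simp [ofCentral] <;> ring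

theorem commutator_le_center :
    commutator (FreeTwoStep ι R) ≤ Subgroup.center (FreeTwoStep ι R) :=
  Subgroup.commutator_le.2 fun a _ b _ ↦ by
    rw [commutator_eq_ofCentral]
    exact ofCentral_mem_center _

end Group

section Basis

variable {ι R : Type*} [LinearOrder ι] [CommRing R]

/-- The standard generators of `FreeTwoStep ι R`. -/
def basis (i : ι) : FreeTwoStep ι R := ⟨Pi.single i 1, 0⟩

theorem commutator_basis (p : IncPair ι) :
    ⁅(basis p.1.1 : FreeTwoStep ι R), (basis p.1.2 : FreeTwoStep ι R)⁆ =
      ofCentral (.ofAdd (Pi.single p 1)) := by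
  rw [commutator_eq_ofCentral]
  congr 2
  obtain ⟨⟨i, j⟩, hij⟩ := p
  ext ⟨⟨k, l⟩, hkl⟩
  have hswap : ¬(k = j ∧ l = i) := fun h ↦ lt_asymm hij (h.1 ▸ h.2 ▸ hkl)
  simp only [basis, Pi.single_apply, Subtype.mk.injEq, Prod.mk.injEq]
  grind

theorem closure_range_basis [Finite ι] {m : ℕ} :
    Subgroup.closure (Set.range (basis : ι → FreeTwoStep ι (ZMod m))) = ⊤ := by
  set H := Subgroup.closure (Set.range (basis : ι → FreeTwoStep ι (ZMod m)))
  have basis_mem (i : ι) : basis i ∈ H := Subgroup.subset_closure ⟨i, rfl⟩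
  have comap_eq_top : H.comap ofCentral = ⊤ := eq_top_of_forall_ofAdd_single_mem fun p ↦ by
    rw [Subgroup.mem_comap, ← commutator_basis]
    exact Subgroup.le_normalizer_iff_commutator_le_left.1 Subgroup.le_normalizer
      (Subgroup.commutator_mem_commutator (basis_mem _) (basis_mem _))
  have map_eq_top : H.map toVec = ⊤ := eq_top_of_forall_ofAdd_single_mem fun i ↦
    ⟨basis i, basis_mem i, rfl⟩
  have ker_le : (toVec : FreeTwoStep ι (ZMod m) →* _).ker ≤ H := by
    rw [ker_toVec, MonoidHom.range_eq_map, Subgroup.map_le_iff_le_comap, comap_eq_top]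
  rw [← Subgroup.comap_map_eq_self ker_le, map_eq_top, Subgroup.comap_top]

end Basis

end FreeTwoStep

section BurnsideGammaHat

theorem mul_inv_mul_mul_inv_mul_mul_inv_eq_one_iff {G : Type*} [Group G] (u v y : G) :
    u * v⁻¹ * y * (u⁻¹ * v) * y⁻¹ = 1 ↔ ⁅u⁻¹ * v, y⁆ = ⁅u⁻¹ * v, u⁆ := by
  have commutator_eq (g : G) : ⁅u⁻¹ * v, g⁆ = u⁻¹ * v * (g * (u⁻¹ * v) * g⁻¹)⁻¹ := by
    rw [commutatorElement_def]; group
  calc u * v⁻¹ * y * (u⁻¹ * v) * y⁻¹ = 1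
      ↔ (u * (u⁻¹ * v) * u⁻¹)⁻¹ * (y * (u⁻¹ * v) * y⁻¹) = 1 := by
        rw [mul_inv_cancel_left, mul_inv_rev, inv_inv]; simp only [mul_assoc]
    _ ↔ u * (u⁻¹ * v) * u⁻¹ = y * (u⁻¹ * v) * y⁻¹ := inv_mul_eq_one
    _ ↔ ⁅u⁻¹ * v, y⁆ = ⁅u⁻¹ * v, u⁆ := by
        rw [commutator_eq, commutator_eq, mul_right_inj, inv_inj, eq_comm]

/-- The generators `x₁, x₂⁻¹, x₃, x₄⁻¹`, in terms of which
`P i = U * V⁻¹ * x i * (U⁻¹ * V) * (x i)⁻¹` for `U` and `V` as in `revDefect`. -/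
def altGen : Fin 4 → B43 :=
  ![x 0, (x 1)⁻¹, x 2, (x 3)⁻¹]

theorem map_P_eq_one_iff {G : Type*} [Group G] (f : B43 →* G) {s : Fin 4 → G}
    (hs : f ∘ altGen = s) (i : Fin 4) :
    f (P i) = 1 ↔ ⁅revDefect s, f (x i)⁆ = ⁅revDefect s, s 0 * s 1 * s 2 * s 3⁆ := by
  subst hs
  rw [revDefect, ← mul_inv_mul_mul_inv_mul_mul_inv_eq_one_iff]
  simp [P, altGen, mul_assoc]

theorem B43.pow_three_eq_one (g : B43) : g ^ 3 = 1 := by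
  obtain ⟨w, rfl⟩ := QuotientGroup.mk_surjective g
  exact (QuotientGroup.eq_one_iff _).2 (Subgroup.subset_normalClosure ⟨w, rfl⟩)

theorem closure_range_x : Subgroup.closure (Set.range x) = ⊤ := by
  rw [show x = QuotientGroup.mk' _ ∘ FreeGroup.of from rfl, Set.range_comp, ← MonoidHom.map_closure,
    FreeGroup.closure_range_of, Subgroup.map_top_of_surjective _ (QuotientGroup.mk'_surjective _)]

theorem closure_range_altGen : Subgroup.closure (Set.range altGen) = ⊤ := by
  rw [← top_le_iff, ← closure_range_x, Subgroup.closure_le, Set.range_subset_iff]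
  have altGen_mem (i : Fin 4) : altGen i ∈ Subgroup.closure (Set.range altGen) :=
    Subgroup.subset_closure ⟨i, rfl⟩
  intro i
  fin_cases i
  · exact altGen_mem 0
  · exact inv_mem_iff.1 (altGen_mem 1)
  · exact altGen_mem 2
  · exact inv_mem_iff.1 (altGen_mem 3)

theorem exists_B43_hom_of_forall_pow_three_eq_one {G : Type*} [Group G]
    (hG : ∀ g : G, g ^ 3 = 1) (s : Fin 4 → G) :
    ∃ f : B43 →* G, ∀ i, f (x i) = s i := by
  refine ⟨QuotientGroup.lift _ (FreeGroup.lift s) (Subgroup.normalClosure_le_normal ?_),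
    fun i ↦ FreeGroup.lift_apply_of⟩
  rintro _ ⟨v, rfl⟩
  rw [SetLike.mem_coe, MonoidHom.mem_ker, map_pow, hG]

/-- The quotient map `B(4,3) → B_γ̂(3)`. -/
def toGammaHat : B43 →* BurnsideGammaHat :=
  QuotientGroup.mk' _

theorem toGammaHat_surjective : Function.Surjective toGammaHat :=
  QuotientGroup.mk'_surjective _

theorem toGammaHat_P (i : Fin 4) : toGammaHat (P i) = 1 :=
  (QuotientGroup.eq_one_iff _).2 <| Subgroup.subset_normalClosure (by fin_cases i <;> simp)

theorem card_incPair_fin_four : Nat.card (IncPair (Fin 4)) = 6 := by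
  rw [Nat.card_eq_fintype_card]; decide

theorem card_BurnsideGammaHat_dvd : Nat.card BurnsideGammaHat ∣ 3 ^ 10 := by
  let s := toGammaHat ∘ altGen
  have pow_three_eq_one (g : BurnsideGammaHat) : g ^ 3 = 1 := by
    obtain ⟨g, rfl⟩ := toGammaHat_surjective g
    rw [← map_pow, B43.pow_three_eq_one, map_one]
  have hG := isTwoEngel_of_forall_pow_three_eq_one pow_three_eq_one
  have closure_s : Subgroup.closure (Set.range s) = ⊤ := by
    rw [Set.range_comp, ← MonoidHom.map_closure, closure_range_altGen,
      Subgroup.map_top_of_surjective _ toGammaHat_surjective]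
  have relator (i : Fin 4) := (map_P_eq_one_iff toGammaHat rfl i).1 (toGammaHat_P i)
  have commute_s (i : Fin 4) : Commute (revDefect s) (s i) :=
    hG.commute_revDefect (fun j ↦ by
      rw [← relator j]; fin_cases j <;> simp [s, altGen]) i
  have card_dvd := card_dvd_pow_of_commutator_mem_center closure_s (fun _ _ ↦
    hG.commutator_mem_center_of_commute_revDefect closure_s commute_s) pow_three_eq_one
  rwa [Nat.card_fin, card_incPair_fin_four] at card_dvd

theorem exists_surjective_hom_FreeTwoStep :
    ∃ f : BurnsideGammaHat →* FreeTwoStep (Fin 4) (ZMod 3), Function.Surjective f := by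
  obtain ⟨f, hf⟩ := exists_B43_hom_of_forall_pow_three_eq_one
    (FreeTwoStep.pow_three_eq_one (ι := Fin 4) (R := ZMod 3)) FreeTwoStep.basis
  have f_P (i : Fin 4) : f (P i) = 1 := by
    have commutator_eq_one (y : FreeTwoStep (Fin 4) (ZMod 3)) :
        ⁅revDefect (f ∘ altGen), y⁆ = 1 :=
      commutatorElement_eq_one_iff_mul_comm.2 <| (Subgroup.mem_center_iff.1
        (FreeTwoStep.commutator_le_center (revDefect_mem_commutator _)) y).symm
    rw [map_P_eq_one_iff f rfl, commutator_eq_one, commutator_eq_one]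
  refine ⟨QuotientGroup.lift _ f (Subgroup.normalClosure_le_normal ?_), ?_⟩
  · rintro _ (rfl | rfl | rfl | rfl) <;> exact f_P _
  · rw [← MonoidHom.range_eq_top, ← top_le_iff, ← FreeTwoStep.closure_range_basis,
      Subgroup.closure_le]
    rintro _ ⟨i, rfl⟩
    exact ⟨toGammaHat (x i), hf i⟩

end BurnsideGammaHat

/-- The group `B_γ̂(3)` is finite, of cardinality exactly `3¹⁰`. -/
theorem card_BurnsideGammaHat :
    Finite BurnsideGammaHat ∧ Nat.card BurnsideGammaHat = 3 ^ 10 := by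
  obtain ⟨f, hf⟩ := exists_surjective_hom_FreeTwoStep
  have dvd_card := Subgroup.card_dvd_of_surjective f hf
  rw [FreeTwoStep.card_eq, Nat.card_zmod, Nat.card_fin, card_incPair_fin_four] at dvd_card
  have card_eq : Nat.card BurnsideGammaHat = 3 ^ 10 :=
    Nat.dvd_antisymm card_BurnsideGammaHat_dvd dvd_card
  exact ⟨Nat.finite_of_card_ne_zero (by simp [card_eq]), card_eq⟩
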